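/- For all r, d ∈ ℕ and every α : F₃^r → F₃ with |α| ≤ 3^{d/2}: E_{p,a}[χ_α(a(p²+1))] = Re[((ω² − 1)/3)^{n₁}·((ω − 1)/3)^{n₂}], where p is uniform on P_{r,d}, a is uniform on {1,2}, p² is the pointwise square, and n_c := #{x ∈ F₃^r : α(x) = c} for c ∈ {1,2}. Consequently, |E_{p,a}[χ_α(a(p²+1))]| ≤ 3^{−|α|/2}. -/

import Mathlib

open scoped BigOperators

abbrev F3 := ZMod 3
abbrev Pt (r : ℕ) := Fin r → F3
abbrev Fn (r : ℕ) := Pt r → F3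

/-- The set of functions `F₃^r → F₃` computed by polynomials of total degree at most `d`
with individual degrees at most `2`. -/
def PolySet (r d : ℕ) : Set (Fn r) :=
  {g | ∃ P : MvPolynomial (Fin r) F3,
        P.totalDegree ≤ d ∧ (∀ i, P.degreeOf i ≤ 2) ∧
        ∀ x, g x = MvPolynomial.eval x P}

noncomputable def polyFinset (r d : ℕ) : Finset (Fn r) :=
  (Set.toFinite (PolySet r d)).toFinset

/-- Support size `|β|`. -/
def supp {r : ℕ} (β : Fn r) : ℕ := (Finset.univ.filter fun x => β x ≠ 0).card

/-- Dot product `⟨β, f⟩ = Σ_x β(x) f(x)` in `F₃`. -/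
def dotF {r : ℕ} (β f : Fn r) : F3 := ∑ x, β x * f x

noncomputable def ω : ℂ := Complex.exp (2 * (Real.pi : ℂ) * Complex.I / 3)

/-- The character `χ_β(f) = ω^{⟨β,f⟩}`. -/
noncomputable def chi {r : ℕ} (β f : Fn r) : ℂ := ω ^ (dotF β f).val

/-- The dual `S^⊥` of a set of functions. -/
def dualSet (r : ℕ) (S : Set (Fn r)) : Set (Fn r) := {g | ∀ h ∈ S, dotF g h = 0}

/-- `Λ` contains exactly one representative, of minimal support size, from each coset
of `𝔉_r` modulo `P_{r,d}^⊥`. -/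
def IsMinRepSet (r d : ℕ) (Λ : Finset (Fn r)) : Prop :=
  (∀ β : Fn r, ∃! β', β' ∈ Λ ∧ β - β' ∈ dualSet r (PolySet r d)) ∧
  (∀ β' ∈ Λ, ∀ γ : Fn r, β' - γ ∈ dualSet r (PolySet r d) → supp β' ≤ supp γ)

/-- The noise `a·(p² + 1)` (pointwise). -/
def shift {r : ℕ} (p : Fn r) (a : F3) : Fn r := fun x => a * (p x ^ 2 + 1)

/-- Fourier coefficient `Â(β)` of a function on `P_{r,d}`. -/
noncomputable def fourierP (r d : ℕ) (A : Fn r → ℂ) (β : Fn r) : ℂ :=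
  (∑ g ∈ polyFinset r d, A g * (starRingEnd ℂ) (chi β g)) / ((polyFinset r d).card : ℂ)

/-- Expectation `E_{f ∈ P_{r,d}}[A(f)]`. -/
noncomputable def expP (r d : ℕ) (A : Fn r → ℝ) : ℝ :=
  (∑ f ∈ polyFinset r d, A f) / ((polyFinset r d).card : ℝ)

/-- Degree-`k` influence `Inf_x^{≤k}(A)` with respect to a set `Λ` of minimal-support
coset representatives. -/
noncomputable def infP (r d k : ℕ) (Λ : Finset (Fn r)) (A : Fn r → ℝ) (x : Pt r) : ℝ :=
  ∑ β ∈ Λ.filter (fun β => β x ≠ 0 ∧ supp β ≤ k),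
    ‖fourierP r d (fun g => (A g : ℂ)) β‖ ^ 2

open MvPolynomial in
lemma interp : ∀ (r d : ℕ) (S : Finset (Pt r)), S.card ^ 2 ≤ 3 ^ d → ∀ f : Fn r,
    ∃ P : MvPolynomial (Fin r) F3, P.totalDegree ≤ d ∧ (∀ i, P.degreeOf i ≤ 2) ∧
      ∀ x ∈ S, MvPolynomial.eval x P = f x := by
  intro r
  induction r with
  | zero =>
    intro d S _ f
    refine ⟨C (f 0), by simp, fun i => i.elim0, fun x _ => ?_⟩
    rw [eval_C]
    congr 1
    exact Subsingleton.elim _ _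
  | succ r ih =>
    intro d S hS f
    let T : F3 → Finset (Pt r) := fun a => Finset.univ.filter fun y => (Fin.cons a y : Pt (r+1)) ∈ S
    have hT : ∀ a (y : Pt r), (Fin.cons a y : Pt (r+1)) ∈ S → y ∈ T a := by
      intro a y h; simp [T, h]
    have hcard : (T 0).card + (T 1).card + (T 2).card ≤ S.card := by
      have h1 : ∀ a, (T a).card = (S.filter fun x => x 0 = a).card := by
        intro a
        apply Finset.card_bij (fun y _ => (Fin.cons a y : Pt (r+1)))
        · intro y hy
          simpa [T] using hy
        · intro y _ z _ h
          exact (Fin.cons_right_injective (α := fun _ => F3) a) h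
        · intro x hx
          simp only [Finset.mem_filter] at hx
          refine ⟨Fin.tail x, ?_, ?_⟩
          · apply hT
            rw [← hx.2, Fin.cons_self_tail]; exact hx.1
          · rw [← hx.2, Fin.cons_self_tail]
      have h2 := Finset.card_eq_sum_card_fiberwise (s := S) (t := (Finset.univ : Finset F3))
        (f := fun x => x 0) (fun _ _ => by simp)
      rw [h1, h1, h1, h2]
      have : ∀ g : F3 → ℕ, ∑ a, g a = g 0 + g 1 + g 2 := fun g => Fin.sum_univ_three g
      rw [this]
    -- ordering of the slices
    obtain ⟨a, b, c, hab, hac, hbc, hall, hle1, hle2, hsum⟩ : ∃ a b c : F3, a ≠ b ∧ a ≠ c ∧ b ≠ c ∧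
        (∀ t, t = a ∨ t = b ∨ t = c) ∧ (T b).card ≤ (T a).card ∧ (T c).card ≤ (T b).card ∧
        (T a).card + (T b).card + (T c).card ≤ S.card := by
      rcases le_total (T 0).card (T 1).card with h01 | h01 <;>
      rcases le_total (T 0).card (T 2).card with h02 | h02 <;>
      rcases le_total (T 1).card (T 2).card with h12 | h12
      · exact ⟨2, 1, 0, by decide, by decide, by decide, by decide, h12, h01, by omega⟩
      · exact ⟨1, 2, 0, by decide, by decide, by decide, by decide, h12, h02, by omega⟩
      · exact ⟨2, 1, 0, by decide, by decide, by decide, by decide, by omega, by omega, by omega⟩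
      · exact ⟨1, 0, 2, by decide, by decide, by decide, by decide, by omega, by omega, by omega⟩
      · exact ⟨2, 0, 1, by decide, by decide, by decide, by decide, by omega, by omega, by omega⟩
      · exact ⟨2, 0, 1, by decide, by decide, by decide, by decide, by omega, by omega, by omega⟩
      · exact ⟨0, 2, 1, by decide, by decide, by decide, by decide, by omega, by omega, by omega⟩
      · exact ⟨0, 1, 2, by decide, by decide, by decide, by decide, by omega, by omega, by omega⟩
    -- lifting
    have hlift0 : ∀ P : MvPolynomial (Fin r) F3, (rename Fin.succ P).degreeOf 0 = 0 := by
      intro P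
      rw [← Nat.le_zero, degreeOf_le_iff]
      intro m hm
      by_contra h0
      have : (0 : Fin (r+1)) ∈ (rename Fin.succ P).vars := by
        rw [mem_vars]; exact ⟨m, hm, by simpa using h0⟩
      have := vars_rename Fin.succ P this
      simp at this
    have hliftS : ∀ (P : MvPolynomial (Fin r) F3) i,
        (rename Fin.succ P).degreeOf (Fin.succ i) = P.degreeOf i := fun P i =>
      degreeOf_rename_of_injective (Fin.succ_injective _) i
    have hliftE : ∀ (P : MvPolynomial (Fin r) F3) (x : Pt (r+1)),
        eval x (rename Fin.succ P) = eval (Fin.tail x) P := fun P x => by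
      rw [eval_rename]; rfl
    have hXd : ∀ (t : F3) , (X 0 - C t : MvPolynomial (Fin (r+1)) F3).totalDegree ≤ 1 := by
      intro t
      refine (totalDegree_sub _ _).trans ?_
      simp
    have hX0 : ∀ (t : F3) , (X 0 - C t : MvPolynomial (Fin (r+1)) F3).degreeOf 0 ≤ 1 := fun t =>
      (degreeOf_le_totalDegree _ _).trans (hXd t)
    have hXS : ∀ (t : F3) (i : Fin r),
        (X 0 - C t : MvPolynomial (Fin (r+1)) F3).degreeOf (Fin.succ i) ≤ 0 := by
      intro t i
      refine (degreeOf_sub_le _ _ _).trans ?_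
      rw [degreeOf_C, degreeOf_X_of_ne (Fin.succ_ne_zero i)]
      simp
    have hmono : (T a).card ^ 2 ≤ 3 ^ d := le_trans (Nat.pow_le_pow_left (by omega) 2) hS
    obtain ⟨P1, h1d, h1i, h1e⟩ := ih d (T a) hmono (fun y => f (Fin.cons a y))
    by_cases hb : (T b).card = 0
    · refine ⟨rename Fin.succ P1, (totalDegree_rename_le _ _).trans h1d, ?_, ?_⟩
      · intro i
        refine Fin.cases ?_ (fun i => ?_) i
        · rw [hlift0]; omega
        · rw [hliftS]; exact h1i i
      · intro x hx
        have hc : (T c).card = 0 := by omega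
        have hx' : Fin.tail x ∈ T (x 0) := hT _ _ (by rw [Fin.cons_self_tail]; exact hx)
        rcases hall (x 0) with h | h | h
        · rw [hliftE, h1e _ (h ▸ hx')]
          simp only [← h, Fin.cons_self_tail]
        · rw [h, Finset.card_eq_zero.1 hb] at hx'; simp at hx'
        · rw [h, Finset.card_eq_zero.1 hc] at hx'; simp at hx'
    · have hd : 2 ≤ d := by
        by_contra hd
        have h3 : 3 ^ d ≤ 3 ^ 1 := Nat.pow_le_pow_right (by norm_num) (by omega)
        have : 2 ≤ S.card := by omega
        nlinarith
      obtain ⟨e, rfl⟩ : ∃ e, d = e + 2 := ⟨d - 2, by omega⟩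
      obtain ⟨P2, h2d, h2i, h2e⟩ := ih (e+1) (T b)
        (by have : 2 * (T b).card ≤ S.card := by omega
            have h9 := Nat.pow_le_pow_left this 2
            have h8 : 3 ^ (e + 2) = 3 ^ (e + 1) * 3 := pow_succ _ _
            rw [mul_pow] at h9; omega)
        (fun y => (f (Fin.cons b y) - eval y P1) / (b - a))
      obtain ⟨P3, h3d, h3i, h3e⟩ := ih e (T c)
        (by have : 3 * (T c).card ≤ S.card := by omega
            have h9 := Nat.pow_le_pow_left this 2
            have h8 : 3 ^ (e + 2) = 3 ^ e * 9 := pow_add _ _ _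
            rw [mul_pow] at h9; omega)
        (fun y => (f (Fin.cons c y) - eval y P1 - (c - a) * eval y P2) / ((c - a) * (c - b)))
      refine ⟨rename Fin.succ P1 + ((X 0 - C a) * rename Fin.succ P2 +
        (X 0 - C a) * (X 0 - C b) * rename Fin.succ P3), ?_, ?_, ?_⟩
      · have t1 := totalDegree_rename_le Fin.succ P1
        have t2 := totalDegree_rename_le Fin.succ P2
        have t3 := totalDegree_rename_le Fin.succ P3
        have u2 := totalDegree_mul (X 0 - C a) (rename Fin.succ P2)
        have u3 := totalDegree_mul ((X 0 - C a) * (X 0 - C b)) (rename Fin.succ P3)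
        have v3 := totalDegree_mul (X 0 - C a : MvPolynomial (Fin (r+1)) F3) (X 0 - C b)
        have := hXd a
        have := hXd b
        refine (totalDegree_add _ _).trans (max_le (by omega) ?_)
        refine (totalDegree_add _ _).trans (max_le (by omega) (by omega))
      · intro i
        have u2 := degreeOf_mul_le i (X 0 - C a) (rename Fin.succ P2)
        have u3 := degreeOf_mul_le i ((X 0 - C a) * (X 0 - C b)) (rename Fin.succ P3)
        have v3 := degreeOf_mul_le i (X 0 - C a : MvPolynomial (Fin (r+1)) F3) (X 0 - C b)
        have : (rename Fin.succ P1).degreeOf i ≤ 2 ∧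
            ((X 0 - C a) * rename Fin.succ P2).degreeOf i ≤ 2 ∧
            ((X 0 - C a) * (X 0 - C b) * rename Fin.succ P3).degreeOf i ≤ 2 := by
          revert u2 u3 v3
          refine Fin.cases ?_ (fun i => ?_) i
          · intro u2 u3 v3
            rw [hlift0] at u2 u3
            have := hX0 a
            have := hX0 b
            rw [hlift0]
            omega
          · intro u2 u3 v3
            rw [hliftS] at u2 u3
            have := hXS a i
            have := hXS b i
            have := h1i i
            have := h2i i
            have := h3i i
            rw [hliftS]
            omega
        refine (degreeOf_add_le _ _ _).trans (max_le this.1 ?_)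
        exact (degreeOf_add_le _ _ _).trans (max_le this.2.1 this.2.2)
      · intro x hx
        have hx' : Fin.tail x ∈ T (x 0) := hT _ _ (by rw [Fin.cons_self_tail]; exact hx)
        have hba : b - a ≠ 0 := sub_ne_zero.2 hab.symm
        have hca : c - a ≠ 0 := sub_ne_zero.2 hac.symm
        have hcb : c - b ≠ 0 := sub_ne_zero.2 hbc.symm
        have hxx : f (Fin.cons (x 0) (Fin.tail x)) = f x := by rw [Fin.cons_self_tail]
        simp only [map_add, map_mul, map_sub, eval_X, eval_C, hliftE]
        rcases hall (x 0) with h | h | h <;> rw [h] at hx' hxx ⊢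
        · rw [h1e _ hx', hxx]; ring
        · rw [h2e _ hx', hxx]; field_simp; ring
        · rw [h3e _ hx', hxx]; field_simp; ring

lemma mem_polyFinset {r d : ℕ} {g : Fn r} : g ∈ polyFinset r d ↔ g ∈ PolySet r d := by
  simp [polyFinset]

lemma PolySet_add {r d : ℕ} {g h : Fn r} (hg : g ∈ PolySet r d) (hh : h ∈ PolySet r d) :
    g + h ∈ PolySet r d := by
  obtain ⟨P, p1, p2, p3⟩ := hg
  obtain ⟨Q, q1, q2, q3⟩ := hh
  exact ⟨P + Q, (MvPolynomial.totalDegree_add _ _).trans (max_le p1 q1),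
    fun i => (MvPolynomial.degreeOf_add_le _ _ _).trans (max_le (p2 i) (q2 i)),
    fun x => by simp [p3, q3]⟩

lemma PolySet_neg {r d : ℕ} {g : Fn r} (hg : g ∈ PolySet r d) : -g ∈ PolySet r d := by
  obtain ⟨P, p1, p2, p3⟩ := hg
  refine ⟨-P, by simpa using p1, fun i => ?_, fun x => by simp [p3]⟩
  rw [MvPolynomial.degreeOf_neg]; exact p2 i

lemma average {r d : ℕ} (S : Finset (Pt r)) (hS : S.card ^ 2 ≤ 3 ^ d) (F : Fn r → ℂ)
    (hF : ∀ g h : Fn r, (∀ x ∈ S, g x = h x) → F g = F h) :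
    (Fintype.card (Fn r) : ℂ) * ∑ p ∈ polyFinset r d, F p
      = ((polyFinset r d).card : ℂ) * ∑ y, F y := by
  have key : ∀ y : Fn r, ∑ p ∈ polyFinset r d, F p = ∑ p ∈ polyFinset r d, F (p + y) := by
    intro y
    obtain ⟨P, h1, h2, h3⟩ := interp r d S hS y
    set L : Fn r := fun x => MvPolynomial.eval x P with hL
    have hLm : L ∈ PolySet r d := ⟨P, h1, h2, fun _ => rfl⟩
    have : ∑ p ∈ polyFinset r d, F (p + y) = ∑ p ∈ polyFinset r d, F (p + L) := by
      refine Finset.sum_congr rfl fun p _ => hF _ _ fun x hx => ?_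
      simp [hL, h3 x hx]
    rw [this]
    symm
    refine Finset.sum_bij' (fun p _ => p + L) (fun p _ => p - L) ?_ ?_ ?_ ?_ ?_
    · intro p hp; rw [mem_polyFinset] at *; exact PolySet_add hp hLm
    · intro p hp; rw [mem_polyFinset] at *
      rw [sub_eq_add_neg]; exact PolySet_add hp (PolySet_neg hLm)
    · intro p _; simp
    · intro p _; simp
    · intro p _; rfl
  have : ∑ y : Fn r, ∑ p ∈ polyFinset r d, F p
      = ∑ y : Fn r, ∑ p ∈ polyFinset r d, F (p + y) := Finset.sum_congr rfl fun y _ => key y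
  rw [Finset.sum_comm (f := fun y p => F (p + y))] at this
  have h2 : ∀ p : Fn r, ∑ y : Fn r, F (p + y) = ∑ y, F y := fun p =>
    Fintype.sum_equiv (Equiv.addLeft p) _ _ fun y => rfl
  simp only [h2, Finset.sum_const, nsmul_eq_mul, Finset.card_univ] at this
  exact this

lemma w_cube : ω ^ 3 = 1 := by
  rw [ω, ← Complex.exp_nat_mul, ← Complex.exp_two_pi_mul_I]
  congr 1; push_cast; ring

lemma w_val : ω = ⟨-1/2, √3/2⟩ := by
  have : (2 * (Real.pi : ℂ) * Complex.I / 3) = ((Real.pi - Real.pi/3 : ℝ) : ℂ) * Complex.I := by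
    push_cast; ring
  rw [ω, this, Complex.exp_mul_I, ← Complex.ofReal_cos, ← Complex.ofReal_sin]
  rw [Real.cos_pi_sub, Real.sin_pi_sub, Real.cos_pi_div_three, Real.sin_pi_div_three]
  apply Complex.ext <;> simp <;> norm_num

lemma w_sq : ω ^ 2 = ⟨-1/2, -√3/2⟩ := by
  rw [w_val, sq]
  have : √3 * √3 = 3 := Real.mul_self_sqrt (by norm_num)
  apply Complex.ext
  · simp only [Complex.mul_re]; nlinarith
  · simp only [Complex.mul_im]; ring

lemma w_conj : (starRingEnd ℂ) ω = ω ^ 2 := by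
  rw [w_sq, w_val]; apply Complex.ext <;> simp; ring

lemma w_sum : 1 + ω + ω ^ 2 = 0 := by
  rw [w_sq, w_val]
  apply Complex.ext <;> simp <;> ring

noncomputable def ee (c : F3) : ℂ := ω ^ c.val

lemma ee_add (a b : F3) : ee (a + b) = ee a * ee b := by
  rw [ee, ee, ee, ← pow_add, ZMod.val_add]
  exact (pow_eq_pow_mod _ w_cube).symm

lemma ee_sum {ι : Type*} (s : Finset ι) (f : ι → F3) : ee (∑ i ∈ s, f i) = ∏ i ∈ s, ee (f i) := by
  classical
  induction s using Finset.induction_on with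
  | empty => simp [ee]
  | insert a s ha ih => rw [Finset.sum_insert ha, Finset.prod_insert ha, ee_add, ih]

/-- One coordinate average. -/
noncomputable def hh (c : F3) : ℂ := (∑ t : F3, ee (c * (t ^ 2 + 1))) / 3

lemma sum3 (g : F3 → ℂ) : ∑ a, g a = g 0 + g 1 + g 2 := Fin.sum_univ_three g

lemma hh_eq (c : F3) : hh c = (ee c + 2 * ee (2 * c)) / 3 := by
  rw [hh, sum3]
  have h0 : c * (0 ^ 2 + 1) = c := by ring
  have h1 : c * (1 ^ 2 + 1) = 2 * c := by ring
  have h2 : c * (2 ^ 2 + 1) = 2 * c := by revert c; decide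
  rw [h0, h1, h2]; ring

lemma ee0 : ee 0 = 1 := by simp [ee]
lemma ee1 : ee 1 = ω := by
  have : (1 : F3).val = 1 := rfl
  rw [ee, this, pow_one]
lemma ee2 : ee 2 = ω ^ 2 := by
  have : (2 : F3).val = 2 := rfl
  rw [ee, this]

lemma hh0 : hh 0 = 1 := by rw [hh_eq, mul_zero, ee0]; norm_num
lemma hh1 : hh 1 = (ω ^ 2 - 1) / 3 := by
  rw [hh_eq, mul_one, ee1, ee2]; linear_combination w_sum / 3
lemma hh2 : hh 2 = (ω - 1) / 3 := by
  have : (2 * 2 : F3) = 1 := by decide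
  rw [hh_eq, this, ee1, ee2]; linear_combination w_sum / 3

lemma cases3 (c : F3) : c = 0 ∨ c = 1 ∨ c = 2 := by revert c; decide

lemma hh_conj (c : F3) : hh (2 * c) = (starRingEnd ℂ) (hh c) := by
  have h4 : (2 * 2 : F3) = 1 := by decide
  have hc2 : (starRingEnd ℂ) (ω ^ 2) = ω := by
    rw [← w_conj, Complex.conj_conj]
  have h3 : (starRingEnd ℂ) 3 = 3 := Complex.conj_ofNat 3
  rcases cases3 c with rfl | rfl | rfl
  · rw [mul_zero, hh0, map_one]
  · rw [mul_one, hh1, hh2, map_div₀, map_sub, hc2, map_one, h3]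
  · rw [h4, hh1, hh2, map_div₀, map_sub, w_conj, map_one, h3]

lemma hh_ite (c : F3) : hh c = (if c = 1 then (ω ^ 2 - 1) / 3 else 1) *
    (if c = 2 then (ω - 1) / 3 else 1) := by
  rcases cases3 c with rfl | rfl | rfl
  · rw [hh0, if_neg (by decide), if_neg (by decide), one_mul]
  · rw [hh1, if_pos rfl, if_neg (by decide), mul_one]
  · rw [hh2, if_neg (by decide), if_pos rfl, one_mul]

lemma prod_hh {r : ℕ} (α : Fn r) : ∏ x, hh (α x) =
    ((ω ^ 2 - 1) / 3) ^ (Finset.univ.filter fun x => α x = 1).card *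
            ((ω - 1) / 3) ^ (Finset.univ.filter fun x => α x = 2).card := by
  simp_rw [hh_ite]
  rw [Finset.prod_mul_distrib, Finset.prod_ite, Finset.prod_ite]
  simp only [Finset.prod_const, one_pow, mul_one]

lemma chi_shift {r : ℕ} (α p : Fn r) (a : F3) :
    chi α (shift p a) = ∏ x, ee (a * α x * (p x ^ 2 + 1)) := by
  have : chi α (shift p a) = ee (dotF α (shift p a)) := rfl
  rw [this, dotF, ee_sum]
  refine Finset.prod_congr rfl fun x _ => ?_
  congr 1; rw [shift]; ring

lemma expect {r d : ℕ} (α : Fn r) (h : supp α ^ 2 ≤ 3 ^ d) (a : F3) :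
    ∑ p ∈ polyFinset r d, chi α (shift p a) = ((polyFinset r d).card : ℂ) * ∏ x, hh (a * α x) := by
  have h1 := average (d := d) (Finset.univ.filter fun x => α x ≠ 0) h
    (fun p => chi α (shift p a)) (by
      intro g h hgh
      simp only [chi_shift]
      refine Finset.prod_congr rfl fun x _ => ?_
      by_cases hx : α x = 0
      · simp [hx]
      · rw [hgh x (by simp [hx])])
  have h2 : ∑ y : Fn r, chi α (shift y a) = (Fintype.card (Fn r) : ℂ) * ∏ x, hh (a * α x) := by
    simp only [chi_shift, hh]
    rw [Finset.prod_div_distrib, Finset.prod_univ_sum, Fintype.piFinset_univ]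
    simp only [Finset.prod_const, Finset.card_univ, Fintype.card_fun, ZMod.card]
    push_cast
    rw [mul_div_cancel₀]
    exact pow_ne_zero _ (by norm_num)
  rw [h2] at h1
  have h3 : (Fintype.card (Fn r) : ℂ) ≠ 0 := by
    exact_mod_cast Fintype.card_ne_zero
  apply mul_left_cancel₀ h3
  rw [h1]; ring

lemma norm_w1 : ‖(ω - 1) / 3‖ = (3 : ℝ) ^ (-(1 : ℝ) / 2) := by
  have h : ‖ω - 1‖ = √3 := by
    rw [Complex.norm_def]
    congr 1
    have : √3 * √3 = 3 := Real.mul_self_sqrt (by norm_num)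
    rw [w_val, Complex.normSq_apply]
    simp only [Complex.sub_re, Complex.sub_im, Complex.one_re, Complex.one_im]
    nlinarith
  have h3 : ‖(3 : ℂ)‖ = 3 := by simp
  rw [norm_div, h, h3, Real.sqrt_eq_rpow]
  nth_rewrite 2 [← Real.rpow_one 3]
  rw [← Real.rpow_sub (by norm_num)]
  norm_num

lemma norm_w2 : ‖(ω ^ 2 - 1) / 3‖ = (3 : ℝ) ^ (-(1 : ℝ) / 2) := by
  have : (ω ^ 2 - 1) / 3 = (starRingEnd ℂ) ((ω - 1) / 3) := by
    rw [map_div₀, map_sub, w_conj, map_one, Complex.conj_ofNat]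
  rw [this, RCLike.norm_conj, norm_w1]

lemma supp_eq {r : ℕ} (α : Fn r) : supp α = (Finset.univ.filter fun x => α x = 1).card +
    (Finset.univ.filter fun x => α x = 2).card := by
  rw [supp, ← Finset.card_union_of_disjoint, ← Finset.filter_or]
  · congr 1
    ext x
    simp only [Finset.mem_filter, Finset.mem_univ, true_and]
    generalize α x = c
    revert c; decide
  · rw [Finset.disjoint_filter]
    intro x _ h
    rw [h]; decide

/-- Explicit eigenvalue computation: for `|α| ≤ 3^{d/2}`,
`E_{p,a}[χ_α(a(p²+1))] = Re[((ω²−1)/3)^{n₁}·((ω−1)/3)^{n₂}]`, where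
`n_c = #{x : α(x) = c}`; consequently its absolute value is at most `3^{−|α|/2}`. -/
theorem stmt16 (r d : ℕ) (α : Fn r) (hα : (supp α : ℝ) ≤ (3 : ℝ) ^ ((d : ℝ) / 2)) :
    (∑ p ∈ polyFinset r d, ∑ a ∈ ({1, 2} : Finset F3), chi α (shift p a)) /
        (((polyFinset r d).card : ℂ) * 2)
      = (((((ω ^ 2 - 1) / 3) ^ (Finset.univ.filter fun x => α x = 1).card *
            ((ω - 1) / 3) ^ (Finset.univ.filter fun x => α x = 2).card).re : ℝ) : ℂ) ∧
    ‖(∑ p ∈ polyFinset r d, ∑ a ∈ ({1, 2} : Finset F3), chi α (shift p a)) /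
        (((polyFinset r d).card : ℂ) * 2)‖
      ≤ (3 : ℝ) ^ (-(supp α : ℝ) / 2) := by
  have hs : supp α ^ 2 ≤ 3 ^ d := by
    have h1 : (supp α : ℝ) ^ 2 ≤ ((3 : ℝ) ^ ((d : ℝ) / 2)) ^ 2 :=
      pow_le_pow_left₀ (by positivity) hα 2
    rw [← Real.rpow_natCast ((3 : ℝ) ^ ((d : ℝ) / 2)), ← Real.rpow_mul (by norm_num)] at h1
    have h2 : (d : ℝ) / 2 * ((2 : ℕ) : ℝ) = (d : ℝ) := by push_cast; ring
    rw [h2, Real.rpow_natCast] at h1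
    exact_mod_cast h1
  have hne : ((polyFinset r d).card : ℂ) ≠ 0 := by
    have : (0 : Fn r) ∈ polyFinset r d := mem_polyFinset.2 ⟨0, by simp, by simp, by simp⟩
    exact_mod_cast Finset.card_ne_zero_of_mem this
  have main : (∑ p ∈ polyFinset r d, ∑ a ∈ ({1, 2} : Finset F3), chi α (shift p a)) /
        (((polyFinset r d).card : ℂ) * 2)
      = (((((ω ^ 2 - 1) / 3) ^ (Finset.univ.filter fun x => α x = 1).card *
            ((ω - 1) / 3) ^ (Finset.univ.filter fun x => α x = 2).card).re : ℝ) : ℂ) := by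
    rw [Finset.sum_comm, Finset.sum_pair (by decide), expect α hs, expect α hs, ← prod_hh]
    simp only [one_mul, hh_conj]
    rw [← map_prod, Complex.re_eq_add_conj]
    field_simp
  refine ⟨main, ?_⟩
  rw [main, Complex.norm_real, Real.norm_eq_abs]
  refine (Complex.abs_re_le_norm _).trans ?_
  rw [norm_mul, norm_pow, norm_pow, norm_w1, norm_w2, ← pow_add, ← supp_eq,
    ← Real.rpow_natCast, ← Real.rpow_mul (by norm_num)]
  apply le_of_eq
  congr 1
  ring
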